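/- arXiv:math/0410116 — 5 statements merged into one kernel-verified Lean document; each statement's English description precedes it below -/
import Mathlib

section
/- Let Q belong to the pinning class R_Y(P). Then the Radon–Nikodym derivative dQ/dP is P-almost everywhere equal to ξ ∘ Y, where ξ = d(Q ∘ Y⁻¹)/d(P ∘ Y⁻¹) is the Radon–Nikodym derivative of the law of Y under Q with respect to the law of Y under P; equivalently, Q is the measure with density ξ ∘ Y with respect to P. (This is the identity Q = ξ(Y)·P established in the proof of Proposition 3.) -/
open MeasureTheory ProbabilityTheory

/-- `κ` is a regular conditional distribution of the identity given `Y` under `P`: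
for every bounded measurable `F : Ω → ℝ` and every bounded measurable `g : E → ℝ`,
`∫ F·(g∘Y) dP = ∫_E g(y) (∫ F d(κ y)) dP_Y(y)`. -/
def IsCondDistribGiven {Ω E : Type*} [MeasurableSpace Ω] [MeasurableSpace E]
    (P : Measure Ω) (Y : Ω → E) (κ : Kernel E Ω) : Prop :=
  ∀ F : Ω → ℝ, Measurable F → (∃ C, ∀ ω, |F ω| ≤ C) →
  ∀ g : E → ℝ, Measurable g → (∃ C, ∀ y, |g y| ≤ C) →
    ∫ ω, F ω * g (Y ω) ∂P = ∫ y, g y * ∫ ω, F ω ∂(κ y) ∂(P.map Y)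

/-- `Q` belongs to the pinning class `R_Y(P)` (relative to the regular conditional
distribution `κP` of `P` given `Y`): `Q` is equivalent to `P` and a regular conditional
distribution of the identity given `Y` under `Q` agrees with `κP` for `P_Y`-a.e. `y`. -/
def InPinningClass {Ω E : Type*} [MeasurableSpace Ω] [MeasurableSpace E]
    (P : Measure Ω) (Y : Ω → E) (κP : Kernel E Ω) (Q : Measure Ω) : Prop :=
  Q ≪ P ∧ P ≪ Q ∧
    ∃ κQ : Kernel E Ω, IsMarkovKernel κQ ∧ IsCondDistribGiven Q Y κQ ∧
      ∀ᵐ y ∂(P.map Y), κQ y = κP y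

theorem abs_indicator_one_le_one {α : Type*} (s : Set α) (x : α) :
    |s.indicator (1 : α → ℝ) x| ≤ 1 := by
  by_cases hx : x ∈ s <;> simp [hx]

/-- The law of `Y` under `P` restricted to `A` has density `y ↦ κ y A` with respect to the
law of `Y` under `P`. -/
theorem IsCondDistribGiven.map_restrict {Ω E : Type*} [MeasurableSpace Ω] [MeasurableSpace E]
    {P : Measure Ω} [IsProbabilityMeasure P] {Y : Ω → E} (hY : Measurable Y)
    {κ : Kernel E Ω} [IsMarkovKernel κ] (h : IsCondDistribGiven P Y κ)
    {A : Set Ω} (hA : MeasurableSet A) :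
    (P.restrict A).map Y = (P.map Y).withDensity (fun y => κ y A) := by
  have : IsProbabilityMeasure (P.map Y) := Measure.isProbabilityMeasure_map hY.aemeasurable
  have hκA : Measurable fun y => κ y A := κ.measurable_coe hA
  ext B hB
  rw [Measure.map_apply hY hB, Measure.restrict_apply (hY hB), withDensity_apply _ hB]
  have key := h (A.indicator 1) (measurable_one.indicator hA) ⟨1, abs_indicator_one_le_one A⟩
    (B.indicator 1) (measurable_one.indicator hB) ⟨1, abs_indicator_one_le_one B⟩
  have hl : (fun ω => A.indicator (1 : Ω → ℝ) ω * B.indicator (1 : E → ℝ) (Y ω))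
      = (Y ⁻¹' B ∩ A).indicator 1 := by
    ext ω
    by_cases h₁ : ω ∈ A <;> by_cases h₂ : Y ω ∈ B <;> simp [h₁, h₂]
  have hr : (fun y => B.indicator (1 : E → ℝ) y * ∫ ω, A.indicator (1 : Ω → ℝ) ω ∂(κ y))
      = B.indicator fun y => (κ y A).toReal := by
    ext y
    by_cases h₂ : y ∈ B <;> simp [h₂, integral_indicator_one hA, Measure.real]
  rw [hl, hr, integral_indicator_one ((hY hB).inter hA), integral_indicator hB,
    integral_toReal hκA.aemeasurable (by simp), Measure.real] at key
  refine (ENNReal.toReal_eq_toReal_iff' (measure_ne_top _ _) ?_).1 key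
  refine ne_top_of_le_ne_top (b := (P.map Y) B) (measure_ne_top _ _) ?_
  calc ∫⁻ y in B, κ y A ∂(P.map Y) ≤ ∫⁻ _ in B, 1 ∂(P.map Y) :=
        lintegral_mono fun _ => prob_le_one
    _ = (P.map Y) B := by simp

theorem pinning_class_density {Ω E : Type*}
    [MeasurableSpace Ω] [StandardBorelSpace Ω]
    [MeasurableSpace E] [StandardBorelSpace E]
    (P : Measure Ω) [IsProbabilityMeasure P]
    (Y : Ω → E) (hY : Measurable Y)
    (κP : Kernel E Ω) [IsMarkovKernel κP]
    (hκP : IsCondDistribGiven P Y κP)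
    (Q : Measure Ω) [IsProbabilityMeasure Q]
    (hQ : InPinningClass P Y κP Q) :
    Q = P.withDensity (fun ω => (Q.map Y).rnDeriv (P.map Y) (Y ω)) := by
  obtain ⟨hQP, -, κQ, _, hκQ, hae⟩ := hQ
  have : IsProbabilityMeasure (P.map Y) := Measure.isProbabilityMeasure_map hY.aemeasurable
  have : IsProbabilityMeasure (Q.map Y) := Measure.isProbabilityMeasure_map hY.aemeasurable
  have hmap : Q.map Y ≪ P.map Y := hQP.map hY
  have hξ := Measure.measurable_rnDeriv (Q.map Y) (P.map Y)
  ext A hA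
  have hκA : Measurable fun y => κP y A := κP.measurable_coe hA
  symm
  calc P.withDensity (fun ω => (Q.map Y).rnDeriv (P.map Y) (Y ω)) A
      = ∫⁻ y, (Q.map Y).rnDeriv (P.map Y) y ∂((P.restrict A).map Y) := by
        rw [withDensity_apply _ hA, lintegral_map hξ hY]
    _ = ∫⁻ y, (Q.map Y).rnDeriv (P.map Y) y * κP y A ∂(P.map Y) := by
        rw [hκP.map_restrict hY hA, lintegral_withDensity_eq_lintegral_mul _ hκA hξ]
        simp only [Pi.mul_apply, mul_comm]
    _ = ∫⁻ y, κP y A ∂(Q.map Y) := lintegral_rnDeriv_mul hmap hκA.aemeasurable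
    _ = ∫⁻ y, κQ y A ∂(Q.map Y) :=
        lintegral_congr_ae (by filter_upwards [hmap.ae_le hae] with y hy; rw [hy])
    _ = (Q.restrict A).map Y Set.univ := by
        rw [hκQ.map_restrict hY hA, withDensity_apply _ .univ, setLIntegral_univ]
    _ = Q A := by
        rw [Measure.map_apply hY .univ, Set.preimage_univ, Measure.restrict_apply_univ]
end

section
/- Let ν be a probability measure on E equivalent to P_Y. Then there exists a unique probability measure Q on Ω such that Q belongs to the pinning class R_Y(P) and the law of Y under Q equals ν; it is given explicitly by Q = the measure with density (dν/dP_Y) ∘ Y with respect to P, equivalently Q(A) = ∫_E (κ_P y)(A) dν(y) for all measurable A. (This is the existence and uniqueness statement in the proof of Proposition 9.) -/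
open MeasureTheory ProbabilityTheory

open scoped ENNReal

theorem MeasureTheory.Measure.map_withDensity_comp {α β : Type*} [MeasurableSpace α]
    [MeasurableSpace β] (μ : Measure α) {h : α → β} (hh : Measurable h) {f : β → ℝ≥0∞}
    (hf : Measurable f) :
    (μ.withDensity (fun x => f (h x))).map h = (μ.map h).withDensity f := by
  ext s hs
  rw [Measure.map_apply hh hs, withDensity_apply _ (hh hs), withDensity_apply _ hs,
    setLIntegral_map hs hf hh]

theorem MeasureTheory.Measure.compProd_withDensity_left {α β : Type*} [MeasurableSpace α]
    [MeasurableSpace β] (μ : Measure α) [SFinite μ] (κ : Kernel α β) [IsSFiniteKernel κ]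
    {f : α → ℝ≥0∞} (hf : Measurable f) :
    (μ.withDensity f).compProd κ = (μ.compProd κ).withDensity (fun p => f p.1) := by
  ext s hs
  rw [Measure.compProd_apply hs, withDensity_apply _ hs, ← lintegral_indicator hs,
    Measure.lintegral_compProd (Measurable.indicator (by fun_prop) hs),
    lintegral_withDensity_eq_lintegral_mul _ hf (Kernel.measurable_kernel_prodMk_left hs)]
  refine lintegral_congr fun a => ?_
  have hs' : MeasurableSet (Prod.mk a ⁻¹' s) := measurable_prodMk_left hs
  calc f a * κ a (Prod.mk a ⁻¹' s)
      = ∫⁻ b, (Prod.mk a ⁻¹' s).indicator (fun _ => f a) b ∂(κ a) :=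
        (lintegral_indicator_const hs' _).symm
    _ = ∫⁻ b, s.indicator (fun p => f p.1) (a, b) ∂(κ a) := rfl

section

variable {Ω E : Type*} [MeasurableSpace Ω] [MeasurableSpace E]

theorem IsCondDistribGiven.map_prodMk_eq_compProd {P : Measure Ω} [IsProbabilityMeasure P]
    {Y : Ω → E} (hY : Measurable Y) {κ : Kernel E Ω} [IsMarkovKernel κ]
    (h : IsCondDistribGiven P Y κ) :
    P.map (fun ω => (Y ω, ω)) = (P.map Y).compProd κ := by
  have hpair : Measurable fun ω => (Y ω, ω) := hY.prodMk measurable_id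
  have := Measure.isProbabilityMeasure_map (μ := P) hY.aemeasurable
  have := Measure.isProbabilityMeasure_map (μ := P) hpair.aemeasurable
  refine Measure.ext_prod fun {s t} hs ht => ?_
  have key := h (t.indicator 1) (measurable_one.indicator ht)
    ⟨1, fun ω => by by_cases hω : ω ∈ t <;> simp [hω]⟩
    (s.indicator 1) (measurable_one.indicator hs)
    ⟨1, fun y => by by_cases hy : y ∈ s <;> simp [hy]⟩
  have hl : (fun ω => t.indicator (1 : Ω → ℝ) ω * s.indicator (1 : E → ℝ) (Y ω))
      = ((fun ω => (Y ω, ω)) ⁻¹' s ×ˢ t).indicator 1 := by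
    ext ω
    by_cases h1 : ω ∈ t <;> by_cases h2 : Y ω ∈ s <;> simp [h1, h2]
  have hr : (fun y => s.indicator (1 : E → ℝ) y * ∫ ω, t.indicator (1 : Ω → ℝ) ω ∂(κ y))
      = s.indicator fun y => (κ y t).toReal := by
    ext y
    rw [integral_indicator_one ht]
    by_cases hy : y ∈ s <;> simp [hy, Measure.real]
  rw [hl, hr, integral_indicator_one (hpair (hs.prod ht)), integral_indicator hs,
    integral_toReal (κ.measurable_coe ht).aemeasurable
      (Filter.Eventually.of_forall fun y => measure_lt_top _ _),
    ← Measure.compProd_apply_prod hs ht, Measure.real, ← Measure.map_apply hpair (hs.prod ht),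
    ENNReal.toReal_eq_toReal_iff' (measure_ne_top _ _) (measure_ne_top _ _)] at key
  exact key

theorem IsCondDistribGiven.of_map_prodMk_eq_compProd {P : Measure Ω} [IsProbabilityMeasure P]
    {Y : Ω → E} (hY : Measurable Y) {κ : Kernel E Ω} [IsMarkovKernel κ]
    (h : P.map (fun ω => (Y ω, ω)) = (P.map Y).compProd κ) :
    IsCondDistribGiven P Y κ := by
  intro F hF ⟨C, hC⟩ g hg ⟨D, hD⟩
  have := Measure.isProbabilityMeasure_map (μ := P) hY.aemeasurable
  have hpair : Measurable fun ω => (Y ω, ω) := hY.prodMk measurable_id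
  have hm : Measurable fun p : E × Ω => g p.1 * F p.2 := by fun_prop
  have hint : Integrable (fun p : E × Ω => g p.1 * F p.2) ((P.map Y).compProd κ) := by
    refine Integrable.of_bound hm.aestronglyMeasurable (D * C)
      (Filter.Eventually.of_forall fun p => ?_)
    rw [norm_mul]
    exact mul_le_mul (hD _) (hC _) (abs_nonneg _) ((abs_nonneg _).trans (hD p.1))
  calc ∫ ω, F ω * g (Y ω) ∂P
      = ∫ p, g p.1 * F p.2 ∂(P.map fun ω => (Y ω, ω)) := by
        rw [integral_map hpair.aemeasurable hm.aestronglyMeasurable]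
        simp only [mul_comm]
    _ = ∫ y, g y * ∫ ω, F ω ∂(κ y) ∂(P.map Y) := by
        rw [h, Measure.integral_compProd hint]
        simp only [integral_const_mul]

theorem InPinningClass.map_prodMk_eq_compProd {P Q : Measure Ω} [IsProbabilityMeasure Q]
    {Y : Ω → E} (hY : Measurable Y) {κ : Kernel E Ω} [IsMarkovKernel κ]
    (hQ : InPinningClass P Y κ Q) :
    Q.map (fun ω => (Y ω, ω)) = (Q.map Y).compProd κ := by
  obtain ⟨hQP, -, κQ, _, hκQ, hae⟩ := hQ
  rw [hκQ.map_prodMk_eq_compProd hY]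
  exact Measure.compProd_congr ((hQP.map hY).ae_le hae)

theorem snd_map_prodMk_id (Q : Measure Ω) {Y : Ω → E} (hY : Measurable Y) :
    (Q.map (fun ω => (Y ω, ω))).snd = Q := by
  rw [Measure.snd_map_prodMk hY]
  exact Measure.map_id

end

theorem exists_unique_pinning_with_law {Ω E : Type*}
    [MeasurableSpace Ω] [StandardBorelSpace Ω]
    [MeasurableSpace E] [StandardBorelSpace E]
    (P : Measure Ω) [IsProbabilityMeasure P]
    (Y : Ω → E) (hY : Measurable Y)
    (κP : Kernel E Ω) [IsMarkovKernel κP]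
    (hκP : IsCondDistribGiven P Y κP)
    (ν : Measure E) [IsProbabilityMeasure ν]
    (hν₁ : ν ≪ P.map Y) (hν₂ : P.map Y ≪ ν) :
    (∃! Q : Measure Ω, IsProbabilityMeasure Q ∧ InPinningClass P Y κP Q ∧ Q.map Y = ν) ∧
    ∀ Q : Measure Ω, IsProbabilityMeasure Q → InPinningClass P Y κP Q → Q.map Y = ν →
      Q = P.withDensity (fun ω => ν.rnDeriv (P.map Y) (Y ω)) ∧
      ∀ A : Set Ω, MeasurableSet A → Q A = ∫⁻ y, κP y A ∂ν := by
  have := Measure.isProbabilityMeasure_map (μ := P) hY.aemeasurable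
  have hf : Measurable (ν.rnDeriv (P.map Y)) := Measure.measurable_rnDeriv _ _
  have hpair : Measurable fun ω => (Y ω, ω) := hY.prodMk measurable_id
  set Q₀ : Measure Ω := P.withDensity (fun ω => ν.rnDeriv (P.map Y) (Y ω)) with hQ₀
  have hlaw : Q₀.map Y = ν := by
    rw [hQ₀, P.map_withDensity_comp hY hf, Measure.withDensity_rnDeriv_eq _ _ hν₁]
  have hjoint : Q₀.map (fun ω => (Y ω, ω)) = ν.compProd κP := by
    rw [hQ₀, P.map_withDensity_comp hpair (f := fun p => ν.rnDeriv (P.map Y) p.1) (by fun_prop),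
      hκP.map_prodMk_eq_compProd hY]
    exact (Measure.compProd_withDensity_left _ κP hf).symm.trans
      (by rw [Measure.withDensity_rnDeriv_eq _ _ hν₁])
  have hprob : IsProbabilityMeasure Q₀ := by
    refine ⟨?_⟩
    rw [← Set.preimage_univ (f := Y), ← Measure.map_apply hY .univ, hlaw, measure_univ]
  have hmem : InPinningClass P Y κP Q₀ := by
    refine ⟨withDensity_absolutelyContinuous _ _,
      withDensity_absolutelyContinuous' (hf.comp hY).aemeasurable ?_,
      κP, inferInstance, .of_map_prodMk_eq_compProd hY (by rw [hlaw, hjoint]),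
      .of_forall fun _ => rfl⟩
    filter_upwards [ae_of_ae_map hY.aemeasurable (Measure.rnDeriv_pos' hν₂)] with ω hω
      using hω.ne'
  have hsnd : ∀ Q : Measure Ω, IsProbabilityMeasure Q → InPinningClass P Y κP Q →
      Q.map Y = ν → Q = (ν.compProd κP).snd := fun Q _ hQ hQν => by
    rw [← hQν, ← hQ.map_prodMk_eq_compProd hY, snd_map_prodMk_id Q hY]
  have huniq : ∀ Q : Measure Ω, IsProbabilityMeasure Q → InPinningClass P Y κP Q →
      Q.map Y = ν → Q = Q₀ := fun Q hQp hQ hQν =>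
    (hsnd Q hQp hQ hQν).trans (hsnd Q₀ hprob hmem hlaw).symm
  refine ⟨⟨Q₀, ⟨hprob, hmem, hlaw⟩, fun Q hQ => huniq Q hQ.1 hQ.2.1 hQ.2.2⟩,
    fun Q hQp hQ hQν => ⟨huniq Q hQp hQ hQν, fun A hA => ?_⟩⟩
  rw [hsnd Q hQp hQ hQν, Measure.snd_compProd, Measure.bind_apply hA κP.aemeasurable]
end

section
/- Suppose η is a disintegration of Y with respect to G and that G is countably generated. Let κ_P be a regular conditional distribution of the identity given Y under P. Then for P_Y-almost every y ∈ E, the restriction of κ_P y to G equals the restriction of P to G weighted by η(y,·): for every A ∈ G, (κ_P y)(A) = ∫_A η(y,ω) dP(ω). (This is the absolute continuity relationship P^y|_{F_t} = η_t^y · P|_{F_t} established in the proof of Proposition 10.) -/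
open MeasureTheory ProbabilityTheory

/-- `η : E × Ω → [0,∞)` is a disintegration of `Y` with respect to the sub-σ-algebra `G`. -/
def IsDisintegration {Ω E : Type*} (G : MeasurableSpace Ω)
    [mΩ : MeasurableSpace Ω] [MeasurableSpace E]
    (P : Measure Ω) (Y : Ω → E) (η : E → Ω → ℝ) : Prop :=
  Measurable (Function.uncurry η) ∧
  (∀ y ω, 0 ≤ η y ω) ∧
  (∀ y, Measurable[G] (η y)) ∧
  ∀ f : E → ℝ, Measurable f → (∃ C, ∀ y, |f y| ≤ C) →
    (fun ω => ∫ y, f y * η y ω ∂(P.map Y)) =ᵐ[P] P[(fun ω => f (Y ω)) | G]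

/-- The defining identity of a conditional distribution, on measurable rectangles. -/
lemma IsCondDistribGiven.setLIntegral_eq {Ω E : Type*} [MeasurableSpace Ω] [MeasurableSpace E]
    {P : Measure Ω} [IsProbabilityMeasure P] {Y : Ω → E} (hY : Measurable Y)
    {κ : Kernel E Ω} [IsMarkovKernel κ] (hκ : IsCondDistribGiven P Y κ)
    {A : Set Ω} (hA : MeasurableSet A) {B : Set E} (hB : MeasurableSet B) :
    ∫⁻ y in B, κ y A ∂(P.map Y) = P (A ∩ Y ⁻¹' B) := by
  have : IsProbabilityMeasure (P.map Y) := Measure.isProbabilityMeasure_map hY.aemeasurable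
  have h := hκ (A.indicator 1) (measurable_one.indicator hA)
    ⟨1, fun ω => by by_cases hω : ω ∈ A <;> simp [hω]⟩
    (B.indicator 1) (measurable_one.indicator hB)
    ⟨1, fun y => by by_cases hy : y ∈ B <;> simp [hy]⟩
  have hleft : (fun ω => A.indicator (1 : Ω → ℝ) ω * B.indicator (1 : E → ℝ) (Y ω)) =
      (A ∩ Y ⁻¹' B).indicator 1 := by
    ext ω
    by_cases h1 : ω ∈ A <;> by_cases h2 : Y ω ∈ B <;> simp [h1, h2]
  have hright : (fun y => B.indicator (1 : E → ℝ) y * ∫ ω, A.indicator (1 : Ω → ℝ) ω ∂(κ y)) =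
      B.indicator (fun y => (κ y A).toReal) := by
    ext y
    by_cases hy : y ∈ B <;> simp [hy, integral_indicator_one hA, Measure.real]
  rw [hleft, hright, integral_indicator_one (hA.inter (hY hB)), integral_indicator hB,
    integral_toReal (κ.measurable_coe hA).aemeasurable
      (Filter.Eventually.of_forall fun y => measure_lt_top _ _)] at h
  refine ((ENNReal.toReal_eq_toReal_iff' (measure_ne_top _ _) ?_).1 h).symm
  refine ne_top_of_le_ne_top (measure_ne_top (P.map Y) B) ?_
  calc ∫⁻ y in B, κ y A ∂(P.map Y) ≤ ∫⁻ _ in B, 1 ∂(P.map Y) :=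
        lintegral_mono fun y => prob_le_one
    _ = P.map Y B := by simp

/-- The defining identity of a disintegration, on measurable rectangles. -/
lemma IsDisintegration.setLIntegral_eq {Ω E : Type*} {G : MeasurableSpace Ω}
    [mΩ : MeasurableSpace Ω] [MeasurableSpace E] (hG : G ≤ mΩ)
    {P : Measure Ω} [IsProbabilityMeasure P] {Y : Ω → E} (hY : Measurable Y)
    {η : E → Ω → ℝ} (hη : IsDisintegration G P Y η)
    {A : Set Ω} (hA : MeasurableSet[G] A) {B : Set E} (hB : MeasurableSet B) :
    ∫⁻ y in B, ∫⁻ ω in A, ENNReal.ofReal (η y ω) ∂P ∂(P.map Y) = P (A ∩ Y ⁻¹' B) := by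
  have : IsProbabilityMeasure (P.map Y) := Measure.isProbabilityMeasure_map hY.aemeasurable
  obtain ⟨hmeas, hnonneg, -, hcond⟩ := hη
  -- The total mass is almost surely one, so the sections of `η` are almost surely integrable.
  have hint : ∀ᵐ ω ∂P, Integrable (fun y => η y ω) (P.map Y) := by
    filter_upwards [hcond (fun _ => 1) measurable_const ⟨1, by simp⟩] with ω hω
    by_contra hni
    simp [integral_undef hni, condExp_const hG] at hω
  have hB_cond := hcond (B.indicator 1) (measurable_one.indicator hB)
    ⟨1, fun y => by by_cases hy : y ∈ B <;> simp [hy]⟩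
  have hpre : (fun ω => B.indicator (1 : E → ℝ) (Y ω)) = (Y ⁻¹' B).indicator 1 := rfl
  rw [hpre] at hB_cond
  have hpre_int : Integrable ((Y ⁻¹' B).indicator (1 : Ω → ℝ)) P :=
    (integrable_const (1 : ℝ)).indicator (hY hB)
  have hinner : ∀ᵐ ω ∂P, ∫⁻ y in B, ENNReal.ofReal (η y ω) ∂(P.map Y) =
      ENNReal.ofReal ((P[(Y ⁻¹' B).indicator (1 : Ω → ℝ) | G]) ω) := by
    filter_upwards [hint, hB_cond] with ω hω hωB
    rw [← hωB, ← ofReal_integral_eq_lintegral_ofReal hω.restrict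
      (Filter.Eventually.of_forall fun y => hnonneg y ω), ← integral_indicator hB]
    congr 2
    ext y
    by_cases hy : y ∈ B <;> simp [hy]
  have hcond_nonneg : 0 ≤ᵐ[P] P[(Y ⁻¹' B).indicator (1 : Ω → ℝ) | G] :=
    condExp_nonneg (Filter.Eventually.of_forall
      (Set.indicator_nonneg fun _ _ => zero_le_one))
  rw [lintegral_lintegral_swap hmeas.ennreal_ofReal.aemeasurable,
    lintegral_congr_ae (ae_restrict_of_ae hinner),
    ← ofReal_integral_eq_lintegral_ofReal integrable_condExp.restrict
      (ae_restrict_of_ae hcond_nonneg),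
    setIntegral_condExp hG hpre_int hA, integral_indicator_one (hY hB), measureReal_def,
    ENNReal.ofReal_toReal (measure_ne_top _ _), Measure.restrict_apply (hY hB), Set.inter_comm]

theorem condDistrib_restrict_eq_density {Ω E : Type*}
    (G : MeasurableSpace Ω)
    [mΩ : MeasurableSpace Ω] [StandardBorelSpace Ω]
    [MeasurableSpace E] [StandardBorelSpace E]
    (hG : G ≤ mΩ) (hGcg : @MeasurableSpace.CountablyGenerated Ω G)
    (P : Measure Ω) [IsProbabilityMeasure P]
    (Y : Ω → E) (hY : Measurable Y)
    (η : E → Ω → ℝ) (hη : IsDisintegration G P Y η)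
    (κP : Kernel E Ω) [IsMarkovKernel κP]
    (hκP : IsCondDistribGiven P Y κP) :
    ∀ᵐ y ∂(P.map Y), ∀ A : Set Ω, MeasurableSet[G] A →
      κP y A = ∫⁻ ω in A, ENNReal.ofReal (η y ω) ∂P := by
  have : IsProbabilityMeasure (P.map Y) := Measure.isProbabilityMeasure_map hY.aemeasurable
  have hset : ∀ A : Set Ω, MeasurableSet[G] A →
      ∀ᵐ y ∂(P.map Y), κP y A = ∫⁻ ω in A, ENNReal.ofReal (η y ω) ∂P := fun A hA =>
    ae_eq_of_forall_setLIntegral_eq_of_sigmaFinite (κP.measurable_coe (hG A hA))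
      hη.1.ennreal_ofReal.lintegral_prod_right' fun B hB _ => by
        rw [hκP.setLIntegral_eq hY (hG A hA) hB, hη.setLIntegral_eq hG hY hA hB]
  obtain ⟨S, hS_count, hS_gen⟩ := hGcg.isCountablyGenerated
  have hC_gen : G = MeasurableSpace.generateFrom (generateSetAlgebra S) := by
    rw [generateFrom_generateSetAlgebra_eq, hS_gen]
  have hC_ae : ∀ᵐ y ∂(P.map Y), ∀ A ∈ generateSetAlgebra S,
      κP y A = ∫⁻ ω in A, ENNReal.ofReal (η y ω) ∂P :=
    (ae_ball_iff (countable_generateSetAlgebra hS_count)).2 fun A hA =>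
      hset A (hC_gen ▸ MeasurableSpace.measurableSet_generateFrom hA)
  filter_upwards [hC_ae] with y hy A hA
  have hdens : ∀ A : Set Ω, MeasurableSet[G] A →
      P.withDensity (fun ω => ENNReal.ofReal (η y ω)) A =
        ∫⁻ ω in A, ENNReal.ofReal (η y ω) ∂P := fun A hA => withDensity_apply _ (hG A hA)
  rw [← hdens A hA]
  refine ext_on_measurableSpace_of_generate_finite mΩ (generateSetAlgebra S)
    (fun B hB => ?_) hG hC_gen
    isSetAlgebra_generateSetAlgebra.isSetRing.isSetSemiring.isPiSystem ?_ hA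
  · rw [hy B hB, hdens B (hC_gen ▸ MeasurableSpace.measurableSet_generateFrom hB)]
  · rw [hy _ isSetAlgebra_generateSetAlgebra.univ_mem, hdens _ MeasurableSet.univ]
end

section
/- Let Q belong to the pinning class R_Y(P), and let Z : Ω → S be a measurable map into a measurable space S such that Z and Y are independent under P. Then the law of Z under Q equals the law of Z under P, i.e. Q ∘ Z⁻¹ = P ∘ Z⁻¹. (This is the key step in the proof of Proposition 10: Q and P coincide on the events which are P-independent of Y.) -/
open MeasureTheory ProbabilityTheory

lemma exists_abs_indicator_one_le {α : Type*} (s : Set α) :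
    ∃ K : ℝ, ∀ x, |s.indicator (1 : α → ℝ) x| ≤ K :=
  ⟨1, fun x => by by_cases hx : x ∈ s <;> simp [hx]⟩

/-- The defining identity of a regular conditional distribution, on indicators. -/
lemma IsCondDistribGiven.measureReal_inter_preimage {Ω E : Type*}
    [MeasurableSpace Ω] [MeasurableSpace E] {P : Measure Ω} {Y : Ω → E} {κ : Kernel E Ω}
    (h : IsCondDistribGiven P Y κ) (hY : Measurable Y) {A : Set Ω} (hA : MeasurableSet A)
    {C : Set E} (hC : MeasurableSet C) :
    P.real (A ∩ Y ⁻¹' C) = ∫ y in C, (κ y).real A ∂(P.map Y) := by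
  have key := h (A.indicator 1) (measurable_one.indicator hA) (exists_abs_indicator_one_le A)
    (C.indicator 1) (measurable_one.indicator hC) (exists_abs_indicator_one_le C)
  have hl : (fun ω => A.indicator (1 : Ω → ℝ) ω * C.indicator (1 : E → ℝ) (Y ω)) =
      (A ∩ Y ⁻¹' C).indicator 1 := by
    ext ω
    by_cases h₁ : ω ∈ A <;> by_cases h₂ : Y ω ∈ C <;> simp [h₁, h₂]
  have hr : (fun y => C.indicator (1 : E → ℝ) y * ∫ ω, A.indicator 1 ω ∂(κ y)) =
      C.indicator fun y => (κ y).real A := by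
    ext y
    rw [integral_indicator_one hA]
    by_cases hy : y ∈ C <;> simp [hy]
  rwa [hl, hr, integral_indicator_one (hA.inter (hY hC)), integral_indicator hC] at key

/-- The conditional probability given `Y` of an event independent of `Y` is almost surely its
unconditional probability. -/
lemma IsCondDistribGiven.ae_measureReal_eq_of_indep {Ω E : Type*}
    [MeasurableSpace Ω] [MeasurableSpace E] {P : Measure Ω} [IsProbabilityMeasure P]
    {Y : Ω → E} {κ : Kernel E Ω} [IsMarkovKernel κ]
    (h : IsCondDistribGiven P Y κ) (hY : Measurable Y) {A : Set Ω} (hA : MeasurableSet A)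
    (hindep : ∀ C, MeasurableSet C → P (A ∩ Y ⁻¹' C) = P A * P (Y ⁻¹' C)) :
    ∀ᵐ y ∂(P.map Y), (κ y).real A = P.real A := by
  have := Measure.isProbabilityMeasure_map (μ := P) hY.aemeasurable
  have hint : Integrable (fun y => (κ y).real A) (P.map Y) :=
    Integrable.of_bound (κ.measurable_coe hA).ennreal_toReal.aestronglyMeasurable 1
      (ae_of_all _ fun y => by simp [abs_of_nonneg measureReal_nonneg])
  refine hint.ae_eq_of_forall_setIntegral_eq _ _ (integrable_const _) fun C hC _ => ?_
  rw [← h.measureReal_inter_preimage hY hA hC, setIntegral_const, measureReal_def, hindep C hC,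
    map_measureReal_apply hY hC, ENNReal.toReal_mul, smul_eq_mul, mul_comm]
  rfl

theorem pinning_preserves_law_of_independent {Ω E S : Type*}
    [MeasurableSpace Ω] [StandardBorelSpace Ω]
    [MeasurableSpace E] [StandardBorelSpace E]
    [MeasurableSpace S]
    (P : Measure Ω) [IsProbabilityMeasure P]
    (Y : Ω → E) (hY : Measurable Y)
    (κP : Kernel E Ω) [IsMarkovKernel κP]
    (hκP : IsCondDistribGiven P Y κP)
    (Q : Measure Ω) [IsProbabilityMeasure Q]
    (hQ : InPinningClass P Y κP Q)
    (Z : Ω → S) (hZ : Measurable Z)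
    (hindep : IndepFun Z Y P) :
    Q.map Z = P.map Z := by
  obtain ⟨hQP, -, κQ, _, hκQ, hκ⟩ := hQ
  have := Measure.isProbabilityMeasure_map (μ := Q) hY.aemeasurable
  ext B hB
  have hA : MeasurableSet (Z ⁻¹' B) := hZ hB
  rw [Measure.map_apply hZ hB, Measure.map_apply hZ hB, ← measureReal_eq_measureReal_iff]
  have hP := hκP.ae_measureReal_eq_of_indep hY hA
    fun C hC => hindep.measure_inter_preimage_eq_mul _ _ hB hC
  have hae : ∀ᵐ y ∂(Q.map Y), (κQ y).real (Z ⁻¹' B) = P.real (Z ⁻¹' B) := by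
    refine (hQP.map hY).ae_le ?_
    filter_upwards [hκ, hP] with y h₁ h₂
    rw [h₁, h₂]
  have hQA := hκQ.measureReal_inter_preimage hY hA MeasurableSet.univ
  rw [Set.preimage_univ, Set.inter_univ, setIntegral_univ] at hQA
  rw [hQA, integral_congr_ae hae]
  simp
end

section
/- Let d ≥ 1, k > 0, let Ω : [0,∞) → (EuclideanSpace ℝ (Fin d) →L[ℝ] EuclideanSpace ℝ (Fin d)) be continuous and satisfy ⟪Ω_s x, x⟫ ≥ k‖x‖² for all s ≥ 0 and all x, and let Λ : [0,∞) → (EuclideanSpace ℝ (Fin d) →L[ℝ] EuclideanSpace ℝ (Fin d)) be continuous and satisfy the integral equation Λ_t = id − ∫₀ᵗ Λ_s ∘ Ω_s ds for all t ≥ 0 (composition of linear maps, Bochner integral). Then the operator norm of Λ_t satisfies ‖Λ_t‖ ≤ e^{−kt} for all t ≥ 0. (This is the Gronwall estimate ‖Λ_t‖ ≤ e^{−kt} derived from the curvature condition (5.2) in the proof of Corollary 15.) -/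
open MeasureTheory
open scoped InnerProductSpace

/-- A continuous-on-`[0, ∞)` integrand gives a primitive differentiable at every `t > 0`. -/
theorem hasDerivAt_of_eq_sub_integral {F : Type*} [NormedAddCommGroup F] [NormedSpace ℝ F]
    [CompleteSpace F] {u f : ℝ → F} {c : F} (hf : ContinuousOn f (Set.Ici 0))
    (hu : ∀ t : ℝ, 0 ≤ t → u t = c - ∫ s in (0 : ℝ)..t, f s) {t : ℝ} (ht : 0 < t) :
    HasDerivAt u (-f t) t := by
  have hint : IntervalIntegrable f volume 0 t := by
    refine (hf.mono fun s hs => ?_).intervalIntegrable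
    rw [Set.uIcc_of_le ht.le] at hs
    exact hs.1
  have hmeas : StronglyMeasurableAtFilter f (nhds t) volume :=
    (hf.mono Set.Ioi_subset_Ici_self).stronglyMeasurableAtFilter isOpen_Ioi t ht
  have hderiv := (intervalIntegral.integral_hasDerivAt_right hint hmeas
    (hf.continuousAt (Ici_mem_nhds ht))).const_sub c
  refine hderiv.congr_of_eventuallyEq ?_
  filter_upwards [Ici_mem_nhds ht] with s hs using hu s hs

/-- Gronwall estimate for the squared norm of a curve with strongly dissipative velocity. -/
theorem norm_le_exp_mul_of_inner_deriv_le {E : Type*} [NormedAddCommGroup E]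
    [InnerProductSpace ℝ E] {k : ℝ} {y y' : ℝ → E} (hy : ContinuousOn y (Set.Ici 0))
    (hderiv : ∀ t : ℝ, 0 < t → HasDerivAt y (y' t) t)
    (hle : ∀ t : ℝ, 0 < t → ⟪y t, y' t⟫_ℝ ≤ -k * ‖y t‖ ^ 2) {t : ℝ} (ht : 0 ≤ t) :
    ‖y t‖ ≤ Real.exp (-k * t) * ‖y 0‖ := by
  have hg : ∀ s : ℝ, 0 < s → HasDerivAt (fun r => Real.exp (2 * k * r) * ‖y r‖ ^ 2)
      (Real.exp (2 * k * s) * (2 * k) * ‖y s‖ ^ 2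
        + Real.exp (2 * k * s) * (2 * ⟪y s, y' s⟫_ℝ)) s := fun s hs =>
    (((hasDerivAt_id s).const_mul (2 * k)).exp.congr_deriv (by simp)).mul (hderiv s hs).norm_sq
  have hanti : AntitoneOn (fun r => Real.exp (2 * k * r) * ‖y r‖ ^ 2) (Set.Ici 0) := by
    refine antitoneOn_of_deriv_nonpos (convex_Ici 0) (by fun_prop) ?_ ?_
    · intro s hs
      rw [interior_Ici] at hs
      exact (hg s hs).differentiableAt.differentiableWithinAt
    · intro s hs
      rw [interior_Ici] at hs
      rw [(hg s hs).deriv]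
      nlinarith [mul_le_mul_of_nonneg_left (hle s hs) (Real.exp_pos (2 * k * s)).le]
  have hsq : Real.exp (2 * k * t) * ‖y t‖ ^ 2 ≤ ‖y 0‖ ^ 2 := by
    simpa using hanti Set.self_mem_Ici ht ht
  have hexp : Real.exp (2 * k * t) = Real.exp (k * t) ^ 2 := by
    rw [← Real.exp_nat_mul]
    push_cast
    ring_nf
  rw [hexp, ← mul_pow] at hsq
  have hroot := le_of_sq_le_sq hsq (norm_nonneg _)
  rw [neg_mul, Real.exp_neg, inv_mul_eq_div, le_div_iff₀' (Real.exp_pos _)]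
  exact hroot

theorem resolvent_norm_decay (d : ℕ) (hd : 1 ≤ d) (k : ℝ) (hk : 0 < k)
    (A : ℝ → (EuclideanSpace ℝ (Fin d) →L[ℝ] EuclideanSpace ℝ (Fin d)))
    (hAcont : ContinuousOn A (Set.Ici (0 : ℝ)))
    (hApos : ∀ s : ℝ, 0 ≤ s → ∀ x : EuclideanSpace ℝ (Fin d),
      k * ‖x‖ ^ 2 ≤ ⟪A s x, x⟫_ℝ)
    (Λ : ℝ → (EuclideanSpace ℝ (Fin d) →L[ℝ] EuclideanSpace ℝ (Fin d)))
    (hΛcont : ContinuousOn Λ (Set.Ici (0 : ℝ)))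
    (hΛ : ∀ t : ℝ, 0 ≤ t →
      Λ t = ContinuousLinearMap.id ℝ (EuclideanSpace ℝ (Fin d))
        - ∫ s in (0 : ℝ)..t, (Λ s).comp (A s)) :
    ∀ t : ℝ, 0 ≤ t → ‖Λ t‖ ≤ Real.exp (-k * t) := by
  intro t ht
  -- The adjoint solves `M' = -A† M`, to which the energy estimate applies pointwise.
  let adj : (EuclideanSpace ℝ (Fin d) →L[ℝ] EuclideanSpace ℝ (Fin d)) →L[ℝ]
      (EuclideanSpace ℝ (Fin d) →L[ℝ] EuclideanSpace ℝ (Fin d)) :=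
    (ContinuousLinearMap.adjoint (𝕜 := ℝ) (E := EuclideanSpace ℝ (Fin d))
      (F := EuclideanSpace ℝ (Fin d))).toContinuousLinearEquiv.toContinuousLinearMap
  have hadj : ∀ B, adj B = ContinuousLinearMap.adjoint B := fun _ => rfl
  rw [← ContinuousLinearMap.adjoint.norm_map (Λ t)]
  refine ContinuousLinearMap.opNorm_le_bound _ (Real.exp_pos _).le fun x => ?_
  have hΛzero : adj (Λ 0) x = x := by
    simp [hadj, hΛ 0 le_rfl, ContinuousLinearMap.adjoint_id]
  have hderiv : ∀ s : ℝ, 0 < s →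
      HasDerivAt (fun r => adj (Λ r) x) (adj (-(Λ s).comp (A s)) x) s := fun s hs =>
    ((ContinuousLinearMap.apply ℝ _ x).comp adj).hasFDerivAt.comp_hasDerivAt
      s (hasDerivAt_of_eq_sub_integral (hΛcont.clm_comp hAcont) hΛ hs)
  have hdecay := norm_le_exp_mul_of_inner_deriv_le (k := k) (y := fun r => adj (Λ r) x)
    ((adj.continuous.comp_continuousOn hΛcont).clm_apply continuousOn_const) hderiv
    (fun s hs => ?_) ht
  · simp only [hΛzero] at hdecay
    exact hdecay
  · have hpos := hApos s hs.le (adj (Λ s) x)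
    simp only [hadj, map_neg, ContinuousLinearMap.adjoint_comp, neg_apply,
      ContinuousLinearMap.comp_apply, inner_neg_right,
      ContinuousLinearMap.adjoint_inner_right] at hpos ⊢
    linarith
end
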